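/- Let G be a finite unweighted graph without isolated vertices, let c_k be the k-th min-max eigenvalue of the signless 1-Laplacian Δ₁⁺, and let λ₁ ≤ ⋯ ≤ λ_n be the eigenvalues of the normalized Laplacian Δ₂. Then for every k = 1,…,n: c_k²/2 ≤ 2 − λ_{n−k+1} ≤ 2·c_k. -/

import Mathlib

open Finset

noncomputable section

/-- The set-valued sign function: `{1}` if `t > 0`, `{-1}` if `t < 0`, `[-1,1]` if `t = 0`. -/
def Sgn (t : ℝ) : Set ℝ := if 0 < t then {1} else if t < 0 then {-1} else Set.Icc (-1) 1

variable {n : ℕ}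

/-- The degree `d_i` of vertex `i` (unit edge weights), as a real number. -/
def degR (G : SimpleGraph (Fin n)) [DecidableRel G.Adj] (i : Fin n) : ℝ := (G.degree i : ℝ)

/-- `vol(V) = Σ_i d_i`. -/
def volV (G : SimpleGraph (Fin n)) [DecidableRel G.Adj] : ℝ := ∑ i, degR G i

/-- `I⁺(x) = Σ_{{i,j} ∈ E} |x_i + x_j|`. -/
def IplusU (G : SimpleGraph (Fin n)) [DecidableRel G.Adj] (x : Fin n → ℝ) : ℝ :=
  (∑ i, ∑ j, if G.Adj i j then |x i + x j| else 0) / 2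

/-- `(λ, x)` with `x ≠ 0` is an eigenpair of the signless 1-Laplacian `Δ₁⁺`:
there are `z_{ij} ∈ Sgn(x_i + x_j)` with `z_{ij} = z_{ji}` and `v_i ∈ Sgn(x_i)` such that
`Σ_{j ∼ i} z_{ij} = λ d_i v_i` for all `i`. -/
def IsEigenSignless (G : SimpleGraph (Fin n)) [DecidableRel G.Adj]
    (lam : ℝ) (x : Fin n → ℝ) : Prop :=
  x ≠ 0 ∧ ∃ z : Fin n → Fin n → ℝ,
    (∀ i j, G.Adj i j → z i j ∈ Sgn (x i + x j)) ∧
    (∀ i j, z i j = z j i) ∧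
    ∃ v : Fin n → ℝ, (∀ i, v i ∈ Sgn (x i)) ∧
      ∀ i, (∑ j, if G.Adj i j then z i j else 0) = lam * degR G i * v i

/-- `D` is the vertex set of a connected component of the subgraph of `G` induced by `P`. -/
def IsCompIn (G : SimpleGraph (Fin n)) (P : Set (Fin n)) (D : Set (Fin n)) : Prop :=
  ∃ v ∈ P, D = {u | Relation.ReflTransGen (fun a b => G.Adj a b ∧ a ∈ P ∧ b ∈ P) v u}

/-- The number `S(x)` of nodal domains of `x`: connected components of the support. -/
def nodalCount (G : SimpleGraph (Fin n)) (x : Fin n → ℝ) : ℕ :=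
  Set.ncard {D : Set (Fin n) | IsCompIn G {i | x i ≠ 0} D}

/-- There is a continuous odd nonvanishing map from `A` into `ℝᵐ ∖ {0}`. -/
def HasOddMap (A : Set (Fin n → ℝ)) (m : ℕ) : Prop :=
  ∃ f : (Fin n → ℝ) → (Fin m → ℝ),
    ContinuousOn f A ∧ (∀ x ∈ A, f (-x) = -f x) ∧ ∀ x ∈ A, f x ≠ 0

/-- `γ(A) ≥ k`, where `γ` is the Krasnoselskii genus: the least `m` admitting a
continuous odd nonvanishing map `A → ℝᵐ ∖ {0}` (with `γ(∅) = 0`, `γ(A) = +∞` if none). -/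
def GenusGe (A : Set (Fin n → ℝ)) (k : ℕ) : Prop := ∀ m, HasOddMap A m → k ≤ m

/-- The `k`-th min-max value of a functional `Φ`:
`inf { sup_{x ∈ A} Φ(x) : A ⊆ ℝⁿ∖{0} symmetric compact, γ(A) ≥ k }`. -/
def minimaxVal (Phi : (Fin n → ℝ) → ℝ) (k : ℕ) : ℝ :=
  sInf {r : ℝ | ∃ A : Set (Fin n → ℝ), IsCompact A ∧ (∀ x ∈ A, -x ∈ A) ∧
    (0 : Fin n → ℝ) ∉ A ∧ GenusGe A k ∧ r = sSup (Phi '' A)}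

/-- The Rayleigh quotient `I⁺(x) / Σ_i d_i |x_i|` of the signless 1-Laplacian. -/
def RayleighPlus (G : SimpleGraph (Fin n)) [DecidableRel G.Adj] (x : Fin n → ℝ) : ℝ :=
  IplusU G x / ∑ i, degR G i * |x i|

/-- The `k`-th min-max eigenvalue `c_k` of the (normalized) signless 1-Laplacian `Δ₁⁺`. -/
def ckSignless (G : SimpleGraph (Fin n)) [DecidableRel G.Adj] (k : ℕ) : ℝ :=
  minimaxVal (RayleighPlus G) k

/-- The normalized Laplacian `Δ₂ = I − D^{-1/2} A D^{-1/2}`. -/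
def normLap (G : SimpleGraph (Fin n)) [DecidableRel G.Adj] : Matrix (Fin n) (Fin n) ℝ :=
  1 - Matrix.of fun i j =>
    (if G.Adj i j then (1 : ℝ) else 0) / (Real.sqrt (degR G i) * Real.sqrt (degR G j))

/-!
Let `Θ x = (xᵢ|xᵢ|)ᵢ`, an odd homeomorphism of `ℝⁿ`. The elementary inequalities
`(a + b)² ≤ 2 |a|a| + b|b||` and `|a|a| + b|b|| ≤ |a + b| (|a| + |b|)`, the second followed by
Cauchy–Schwarz, give `Q / 2 ≤ R ∘ Θ ≤ √(2 Q)`, where `R` is the Rayleigh quotient of `Δ₁⁺` and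
`Q x = ∑ (xᵢ + xⱼ)² / ∑ dᵢ xᵢ²` is the Rayleigh quotient of `2 - Δ₂` in the variable `D^{1/2} x`.
By Borsuk–Ulam, the image under `Θ` of the unit sphere of a `k`-dimensional subspace has genus at
least `k`, and the preimage under `Θ` of a set of genus at least `k` meets every subspace of
codimension less than `k`. Spans of eigenvectors of `Δ₂` then give the two bounds on `c_k`.

Borsuk–Ulam is proved algebraically. By Stone–Weierstrass and compactness it suffices to solve
`∑ Xᵢ² = 1`, `Xⱼ₊₁ ^ d + qⱼ = 0` for odd polynomials `qⱼ` of degree less than an odd `d`. The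
quotient algebra has a basis of standard monomials, of which `d ^ n`, an odd number, are even. So
the even part is of odd dimension, and over a real closed field commuting operators on a space of
odd dimension have a common eigenvector; from it one builds a joint eigenvector of the coordinate
multiplications, whose eigenvalues are the coordinates of a real solution.
-/

section OddDimension

open Module

instance : IsRealClosed ℝ :=
  IsRealClosed.of_linearOrderedField (fun h => ⟨_, (Real.mul_self_sqrt h).symm⟩) fun {p} hodd => by
    wlog hp : 0 ≤ p.leadingCoeff generalizing p
    · obtain ⟨x, hx⟩ := this (p := -p) (by rwa [Polynomial.natDegree_neg])
        (by rw [Polynomial.leadingCoeff_neg]; linarith)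
      exact ⟨x, by simpa [Polynomial.IsRoot] using hx⟩
    have hdeg : (p.comp (-Polynomial.X)).natDegree = p.natDegree := by
      simp [Polynomial.natDegree_comp]
    have htop := p.tendsto_atTop_of_leadingCoeff_nonneg
      (Polynomial.natDegree_pos_iff_degree_pos.1 hodd.pos) hp
    have hbot := (p.comp (-Polynomial.X)).tendsto_atBot_of_leadingCoeff_nonpos
      (Polynomial.natDegree_pos_iff_degree_pos.1 (by rw [hdeg]; exact hodd.pos)) (by
        rw [Polynomial.leadingCoeff_comp (by simp)]
        simpa [hodd.neg_one_pow] using hp)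
    obtain ⟨a, ha⟩ := (htop.eventually (Filter.eventually_ge_atTop 0)).exists
    obtain ⟨b, hb⟩ := (hbot.eventually (Filter.eventually_le_atBot 0)).exists
    exact mem_range_of_exists_le_of_exists_ge p.continuous ⟨-b, by simpa using hb⟩ ⟨a, ha⟩

variable {R V : Type*} [Field R] [IsRealClosed R] [AddCommGroup V] [Module R V]

theorem exists_hasEigenvalue_of_odd_finrank [FiniteDimensional R V] (hV : Odd (finrank R V))
    (T : End R V) : ∃ c, T.HasEigenvalue c := by
  obtain ⟨c, hc⟩ := IsRealClosed.exists_isRoot_of_odd_natDegree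
    (f := T.charpoly) (by rwa [LinearMap.charpoly_natDegree])
  exact ⟨c, T.hasEigenvalue_iff_isRoot_charpoly c |>.2 hc⟩

theorem finrank_inf_ker_add_finrank_map {K V W : Type*} [DivisionRing K] [AddCommGroup V]
    [Module K V] [AddCommGroup W] [Module K W] (T : V →ₗ[K] W) (p : Submodule K V)
    [FiniteDimensional K p] :
    finrank K ↥(p ⊓ LinearMap.ker T) + finrank K (p.map T) = finrank K p := by
  rw [← (T.domRestrict p).finrank_range_add_finrank_ker, LinearMap.range_domRestrict,
    LinearMap.ker_domRestrict, add_comm, ← Submodule.map_comap_subtype,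
    Submodule.finrank_map_subtype_eq]

theorem exists_lt_odd_finrank_of_not_scalar [FiniteDimensional R V] {T : End R V}
    {p : Submodule R V} (hp : Odd (finrank R p)) (hinv : p ∈ End.invtSubmodule T)
    (hT : ¬ ∃ c : R, ∀ v ∈ p, T v = c • v) :
    ∃ q < p, Odd (finrank R q) ∧
      ∀ T', Commute T' T → p ∈ End.invtSubmodule T' → q ∈ End.invtSubmodule T' := by
  obtain ⟨c, hc⟩ := exists_hasEigenvalue_of_odd_finrank hp (T.restrict hinv)
  obtain ⟨v, hv⟩ := hc.exists_hasEigenvector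
  push Not at hT
  obtain ⟨u, hu, huc⟩ := hT c
  set N : End R V := T - algebraMap R (End R V) c with hN
  have hvN : (v : V) ∈ LinearMap.ker N := by
    simpa [hN, sub_eq_zero] using
      (LinearMap.coe_restrict_apply hinv v).symm.trans (congrArg Subtype.val hv.apply_eq_smul)
  have huN : u ∉ LinearMap.ker N := by simpa [hN, sub_eq_zero] using huc
  have hcomm {T'} (hT' : Commute T' T) (x : V) : T' (N x) = N (T' x) :=
    LinearMap.congr_fun (hT'.sub_right (Algebra.commutes c T').symm).eq x
  have hmap_le : p.map N ≤ p := by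
    rintro _ ⟨x, hx, rfl⟩
    exact p.sub_mem (hinv hx) (p.smul_mem c hx)
  have hdim := finrank_inf_ker_add_finrank_map N p
  have hker : 1 ≤ finrank R ↥(p ⊓ LinearMap.ker N) :=
    Submodule.one_le_finrank_iff.2 ((Submodule.ne_bot_iff _).2
      ⟨v, ⟨v.2, hvN⟩, by simpa using hv.2⟩)
  obtain hodd | hodd : Odd (finrank R ↥(p ⊓ LinearMap.ker N)) ∨ Odd (finrank R (p.map N)) := by
    rw [← hdim] at hp; grind
  · exact ⟨_, inf_le_left.lt_of_ne fun h => huN (h.ge hu).2, hodd, fun T' hT' hpT' x hx =>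
      ⟨hpT' hx.1, (hcomm hT' x).symm.trans (by rw [hx.2, map_zero])⟩⟩
  · refine ⟨_, hmap_le.lt_of_ne fun h => ?_, hodd, fun T' hT' hpT' => ?_⟩
    · rw [h] at hdim; omega
    · rintro _ ⟨x, hx, rfl⟩
      exact ⟨T' x, hpT' hx, (hcomm hT' x).symm⟩

theorem exists_common_eigenvector_of_odd_finrank [FiniteDimensional R V] {S : Set (End R V)}
    (hS : S.Pairwise Commute) (p : Submodule R V) (hp : Odd (finrank R p))
    (hinv : ∀ T ∈ S, p ∈ End.invtSubmodule T) :
    ∃ v ∈ p, v ≠ 0 ∧ ∀ T ∈ S, ∃ c : R, T v = c • v := by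
  induction p using WellFoundedLT.induction with
  | _ p ih =>
  by_cases hscalar : ∀ T ∈ S, ∃ c : R, ∀ v ∈ p, T v = c • v
  · obtain ⟨v, hvp, hv⟩ := p.ne_bot_iff.1 (Submodule.one_le_finrank_iff.1 hp.pos)
    exact ⟨v, hvp, hv, fun T hT => (hscalar T hT).imp fun c hc => hc v hvp⟩
  · push Not at hscalar
    obtain ⟨T, hT, hTp⟩ := hscalar
    obtain ⟨q, hqp, hq, hqinv⟩ :=
      exists_lt_odd_finrank_of_not_scalar hp (hinv T hT) (by push Not; exact hTp)
    obtain ⟨v, hvq, hv⟩ := ih q hqp hq fun T' hT' => hqinv T' (hS.of_refl hT' hT) (hinv T' hT')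
    exact ⟨v, hqp.le hvq, hv⟩

/-- The eigenvector is `M i v + r v`, where `v` is a common eigenvector of all `M i * M j` in the
even part and `r² = c i i > 0` is the eigenvalue of `(M i)²` there. -/
theorem exists_joint_eigenvector_of_antipodal [LinearOrder R] [IsStrictOrderedRing R]
    [FiniteDimensional R V] {ι : Type*} [Fintype ι] {M : ι → End R V} {S : End R V}
    (hM : ∀ i j, Commute (M i) (M j)) (hSM : ∀ i, S * M i = -(M i * S))
    (hsum : ∑ i, M i * M i = 1) (hS : Odd (finrank R (S.eigenspace 1))) :
    ∃ a : ι → R, ∃ w ≠ 0, ∀ i, M i w = a i • w := by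
  have hSM' (i : ι) (x : V) : S (M i x) = -M i (S x) := LinearMap.congr_fun (hSM i) x
  obtain ⟨v, hvS, hv0, hv⟩ := exists_common_eigenvector_of_odd_finrank
    (S := Set.range fun ij : ι × ι => M ij.1 * M ij.2) (by
      rintro _ ⟨⟨i, j⟩, rfl⟩ _ ⟨⟨k, l⟩, rfl⟩ -
      exact ((hM i k).mul_right (hM i l)).mul_left ((hM j k).mul_right (hM j l)))
    (S.eigenspace 1) hS (by
      rintro _ ⟨⟨i, j⟩, rfl⟩ x hx
      simp_all)
  have hSv : S v = v := by simpa using End.mem_eigenspace_iff.1 hvS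
  choose c hc using fun i j => hv _ ⟨(i, j), rfl⟩
  have hcsum : ∑ i, c i i = 1 := by
    have := LinearMap.congr_fun hsum v
    simp only [LinearMap.sum_apply, hc, ← Finset.sum_smul, End.one_apply] at this
    exact smul_left_injective R hv0 (by simpa using this)
  obtain ⟨i, -, hi⟩ : ∃ i ∈ univ, 0 < c i i :=
    Finset.exists_lt_of_sum_lt (f := 0) (by simp [hcsum])
  obtain ⟨r, hr⟩ := IsRealClosed.nonneg_iff_isSquare.1 hi.le
  have hr0 : r ≠ 0 := by rintro rfl; simp [hr] at hi
  refine ⟨fun j => c i j / r, M i v + r • v, fun h => ?_, fun j => ?_⟩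
  · have hneg : -M i v + r • v = 0 := by simpa [hSM', hSv] using congrArg S h
    have : (2 * r) • v = 0 := by linear_combination (norm := module) h + hneg
    simp [hr0, hv0] at this
  · have hji : M j (M i v) = c i j • v := (LinearMap.congr_fun (hM j i).eq v).trans (hc i j)
    have hMj : c i i • M j v = c i j • M i v := by
      rw [← map_smul, ← hc, ← map_smul, ← hji]
      exact LinearMap.congr_fun ((hM j i).mul_right (hM j i)).eq v |>.trans
        (congrArg (M i) (LinearMap.congr_fun (hM j i).eq v)).symm
    calc M j (M i v + r • v) = c i j • v + (r / c i i) • c i i • M j v := by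
          rw [map_add, map_smul, hji, smul_smul, div_mul_cancel₀ _ hi.ne']
      _ = (c i j / r) • (M i v + r • v) := by
          rw [hMj, hr, smul_add, smul_smul, smul_smul, add_comm]
          congr 2 <;> field_simp

theorem finrank_eigenspace_eq_natCard {κ K V : Type*} [Field K] [AddCommGroup V] [Module K V]
    (b : Basis κ K V) {T : End K V} {ε : κ → K} (hT : ∀ k, T (b k) = ε k • b k) (c : K) :
    finrank K (T.eigenspace c) = Nat.card {k // ε k = c} := by
  have hspan : T.eigenspace c = Submodule.span K (Set.range fun k : {k // ε k = c} => b k) := by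
    refine le_antisymm (fun x hx => ?_) (Submodule.span_le.2 ?_)
    · rw [show Set.range (fun k : {k // ε k = c} => b k) = b '' {k | ε k = c} by
        rw [← Subtype.range_coe_subtype, ← Set.range_comp, Function.comp_def], b.mem_span_image]
      intro k hk
      have hcoord : b.coord k ∘ₗ T = ε k • b.coord k := b.ext fun l => by
        obtain rfl | hlk := eq_or_ne l k <;> simp [*]
      have hTx := LinearMap.congr_fun hcoord x
      rw [LinearMap.comp_apply, End.mem_eigenspace_iff.1 hx, map_smul] at hTx
      exact (mul_right_cancel₀ (Finsupp.mem_support_iff.1 hk) hTx).symm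
    · rintro _ ⟨⟨k, rfl⟩, rfl⟩
      exact End.mem_eigenspace_iff.2 (hT k)
  rw [hspan]
  exact finrank_eq_nat_card_basis (.span (b.linearIndependent.comp _ Subtype.val_injective))

end OddDimension

section StandardMonomials

open MvPolynomial Module

variable {σ R : Type*} [CommRing R] {m : MonomialOrder σ}

theorem linearIndependent_of_monic {f : (σ →₀ ℕ) → MvPolynomial σ R} (hf : ∀ b, m.Monic (f b))
    (hdeg : ∀ b, m.degree (f b) = b) : LinearIndependent R f := by
  refine linearIndependent_iff'.2 fun s c hsum => ?_
  classical
  by_contra! hne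
  obtain ⟨b, hb, hbmax⟩ := (s.filter (c · ≠ 0)).exists_max_image m.toSyn
    (by simpa [Finset.Nonempty] using hne)
  rw [mem_filter] at hb
  have hcoeff : ∀ b' ∈ s, b' ≠ b → coeff b (c b' • f b') = 0 := by
    intro b' hb' hbb'
    by_cases hcb' : c b' = 0
    · simp [hcb']
    · have hlt : m.toSyn b' < m.toSyn b :=
        (hbmax b' (by simp [hb', hcb'])).lt_of_ne (m.toSyn.injective.ne hbb')
      rw [coeff_smul, m.coeff_eq_zero_of_lt (by rwa [hdeg]), smul_zero]
  have hb1 : coeff b (f b) = 1 := by simpa [hdeg] using (hf b).coeff_degree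
  have hcb := congrArg (coeff b) hsum
  rw [coeff_sum, sum_eq_single_of_mem b hb.1 hcoeff, coeff_smul, hb1] at hcb
  exact hb.2 (by simpa using hcb)

theorem span_range_eq_top_of_monic {f : (σ →₀ ℕ) → MvPolynomial σ R} (hf : ∀ b, m.Monic (f b))
    (hdeg : ∀ b, m.degree (f b) = b) : Submodule.span R (Set.range f) = ⊤ := by
  refine Submodule.eq_top_iff'.2 fun p => ?_
  induction hp : m.toSyn (m.degree p) using WellFoundedLT.induction generalizing p with
  | _ d ih =>
  subst hp
  set r := p - m.leadingCoeff p • f (m.degree p) with hr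
  have hmem : m.leadingCoeff p • f (m.degree p) ∈ Submodule.span R (Set.range f) :=
    Submodule.smul_mem _ _ (Submodule.subset_span ⟨_, rfl⟩)
  suffices r ∈ Submodule.span R (Set.range f) by simpa [hr] using add_mem this hmem
  by_cases hr0 : r = 0
  · simp [hr0]
  refine ih _ (lt_of_le_of_ne ?_ fun h => ?_) r rfl
  · refine m.degree_sub_le.trans (sup_le le_rfl (m.degree_smul_le.trans ?_))
    rw [hdeg]
  · have hcoeff : coeff (m.degree p) r = 0 := by
      have := (hf (m.degree p)).coeff_degree
      rw [hdeg] at this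
      simp [hr, this, MonomialOrder.leadingCoeff]
    rw [← m.toSyn.injective h] at hcoeff
    exact m.coeff_degree_ne_zero_iff.2 hr0 hcoeff

variable {g : σ → MvPolynomial σ R} {e : σ → ℕ}

section MixedMonomial

variable [Fintype σ]

/-- The product `∏ Xᵢ ^ rᵢ gᵢ ^ qᵢ`, where `bᵢ = rᵢ + eᵢ qᵢ` is Euclidean division. When `gᵢ` has
leading monomial `Xᵢ ^ eᵢ`, it has leading monomial `X ^ b`, and it lies in the ideal generated by
the `gᵢ` as soon as `X ^ b` is divisible by one of the leading monomials. -/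
def mixedMonomial (g : σ → MvPolynomial σ R) (e : σ → ℕ) (b : σ →₀ ℕ) : MvPolynomial σ R :=
  ∏ i, X i ^ (b i % e i) * g i ^ (b i / e i)

theorem monic_mixedMonomial (hg : ∀ i, m.Monic (g i)) (b : σ →₀ ℕ) :
    m.Monic (mixedMonomial g e b) := by
  have h (i) : m.leadingCoeff (X i ^ (b i % e i) * g i ^ (b i / e i) : MvPolynomial σ R) = 1 :=
    (m.monic_X.pow (n := b i % e i)).mul ((hg i).pow (n := b i / e i))
  rw [MonomialOrder.Monic, mixedMonomial,
    MonomialOrder.leadingCoeff_prod_of_regular fun i _ => by simp [h, isRegular_one]]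
  simp [h]

theorem mixedMonomial_add_single (he : ∀ i, 0 < e i) (b : σ →₀ ℕ) (i : σ) :
    mixedMonomial g e (b + Finsupp.single i (e i)) = mixedMonomial g e b * g i := by
  classical
  rw [mixedMonomial, mixedMonomial, ← mul_prod_erase _ _ (mem_univ i),
    ← mul_prod_erase (a := i) univ (fun j => X j ^ (b j % e j) * g j ^ (b j / e j)) (mem_univ i)]
  have hrest : ∀ j ∈ univ.erase i, (b + Finsupp.single i (e i)) j = b j := fun j hj => by
    simp [Finsupp.single_eq_of_ne (ne_of_mem_erase hj)]
  rw [prod_congr rfl fun j hj => by rw [hrest j hj]]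
  simp only [Finsupp.add_apply, Finsupp.single_eq_same, Nat.add_mod_right,
    Nat.add_div_right _ (he i)]
  ring

theorem mixedMonomial_of_forall_lt {b : σ →₀ ℕ} (hb : ∀ i, b i < e i) :
    mixedMonomial g e b = monomial b 1 := by
  rw [monomial_eq, C_1, one_mul, Finsupp.prod_fintype _ _ (by simp), mixedMonomial]
  exact prod_congr rfl fun i _ => by simp [Nat.mod_eq_of_lt (hb i), Nat.div_eq_of_lt (hb i)]

variable [Nontrivial R]

theorem degree_mixedMonomial (hg : ∀ i, m.Monic (g i))
    (hdeg : ∀ i, m.degree (g i) = Finsupp.single i (e i)) (b : σ →₀ ℕ) :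
    m.degree (mixedMonomial g e b) = b := by
  have hpow {p : MvPolynomial σ R} (hp : m.Monic p) (k : ℕ) : m.degree (p ^ k) = k • m.degree p :=
    m.degree_pow_of_pow_leadingCoeff_ne_zero (by simp [hp.leadingCoeff_eq_one])
  have hX (i) : m.Monic (X i ^ (b i % e i) : MvPolynomial σ R) := m.monic_X.pow
  have hgi (i) : m.Monic (g i ^ (b i / e i)) := (hg i).pow
  rw [mixedMonomial, m.degree_prod_of_regular fun i _ => by
    simp [((hX i).mul (hgi i)).leadingCoeff_eq_one, isRegular_one]]
  conv_rhs => rw [← Finsupp.univ_sum_single b]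
  refine sum_congr rfl fun i _ => ?_
  rw [m.degree_mul_of_isRegular_left (by simp [(hX i).leadingCoeff_eq_one, isRegular_one])
    (hgi i).ne_zero, hpow m.monic_X, hpow (hg i), m.degree_X, hdeg,
    Finsupp.smul_single, Finsupp.smul_single, ← Finsupp.single_add]
  congr 1
  simpa [mul_comm] using Nat.mod_add_div (b i) (e i)

theorem restrictScalars_span_eq_span_mixedMonomial (hg : ∀ i, m.Monic (g i))
    (hdeg : ∀ i, m.degree (g i) = Finsupp.single i (e i)) (he : ∀ i, 0 < e i) :
    (Ideal.span (Set.range g)).restrictScalars R =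
      Submodule.span R (mixedMonomial g e '' {b | ∃ i, e i ≤ b i}) := by
  apply le_antisymm
  · intro p hp
    obtain ⟨c, rfl⟩ := Ideal.mem_span_range_iff_exists_fun.1 hp
    refine sum_mem fun i _ => ?_
    have hc : c i ∈ Submodule.span R (Set.range (mixedMonomial g e)) := by
      rw [span_range_eq_top_of_monic (monic_mixedMonomial hg) (degree_mixedMonomial hg hdeg)]
      trivial
    suffices h : Submodule.span R (Set.range (mixedMonomial g e)) ≤ Submodule.comap
        (LinearMap.mulRight R (g i))
        (Submodule.span R (mixedMonomial g e '' {b | ∃ i, e i ≤ b i})) from h hc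
    rw [Submodule.span_le]
    rintro _ ⟨b, rfl⟩
    exact Submodule.subset_span ⟨b + Finsupp.single i (e i), ⟨i, by simp⟩,
      mixedMonomial_add_single he b i⟩
  · rw [Submodule.span_le]
    rintro _ ⟨b, ⟨i, hi⟩, rfl⟩
    obtain ⟨b, rfl⟩ := exists_add_of_le (Finsupp.single_le_iff.2 hi)
    rw [add_comm, mixedMonomial_add_single he]
    exact Ideal.mul_mem_left _ _ (Ideal.subset_span ⟨i, rfl⟩)

end MixedMonomial

variable [Finite σ] [Nontrivial R]

theorem linearIndependent_mk_standardMonomial (hg : ∀ i, m.Monic (g i))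
    (hdeg : ∀ i, m.degree (g i) = Finsupp.single i (e i)) (he : ∀ i, 0 < e i) :
    LinearIndependent R fun b : {b : σ →₀ ℕ // ∀ i, b i < e i} =>
      Ideal.Quotient.mkₐ R (Ideal.span (Set.range g)) (monomial b.1 1) := by
  have := Fintype.ofFinite σ
  have hB := linearIndependent_of_monic (monic_mixedMonomial hg) (degree_mixedMonomial hg hdeg)
  set q := (Ideal.Quotient.mkₐ R (Ideal.span (Set.range g))).toLinearMap
  have hker : LinearMap.ker q =
      Submodule.span R (mixedMonomial g e '' {b | ∃ i, e i ≤ b i}) := by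
    rw [← restrictScalars_span_eq_span_mixedMonomial hg hdeg he]
    ext p
    simp [q, Ideal.Quotient.eq_zero_iff_mem]
  have hfun : (fun b : {b : σ →₀ ℕ // ∀ i, b i < e i} =>
      Ideal.Quotient.mkₐ R (Ideal.span (Set.range g)) (monomial b.1 1)) =
        q ∘ mixedMonomial g e ∘ (↑) :=
    funext fun b => by simp [q, mixedMonomial_of_forall_lt b.2]
  rw [hfun]
  refine (hB.comp _ Subtype.val_injective).map ?_
  rw [hker, Set.range_comp, Subtype.range_coe_subtype]
  refine hB.disjoint_span_image (Set.disjoint_left.2 ?_)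
  rintro b hb ⟨i, hi⟩
  exact (hb i).not_ge hi

theorem span_range_mk_standardMonomial (hg : ∀ i, m.Monic (g i))
    (hdeg : ∀ i, m.degree (g i) = Finsupp.single i (e i)) (he : ∀ i, 0 < e i) :
    Submodule.span R (Set.range fun b : {b : σ →₀ ℕ // ∀ i, b i < e i} =>
      Ideal.Quotient.mkₐ R (Ideal.span (Set.range g)) (monomial b.1 1)) = ⊤ := by
  have := Fintype.ofFinite σ
  set q := (Ideal.Quotient.mkₐ R (Ideal.span (Set.range g))).toLinearMap
  have hq : LinearMap.range q = ⊤ := LinearMap.range_eq_top.2 Ideal.Quotient.mk_surjective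
  rw [eq_top_iff, ← hq, LinearMap.range_eq_map, ← span_range_eq_top_of_monic
    (monic_mixedMonomial hg) (degree_mixedMonomial hg hdeg), Submodule.map_span_le]
  rintro _ ⟨b, rfl⟩
  by_cases hb : ∃ i, e i ≤ b i
  · have : mixedMonomial g e b ∈ Ideal.span (Set.range g) := by
      rw [← Submodule.restrictScalars_mem R,
        restrictScalars_span_eq_span_mixedMonomial hg hdeg he]
      exact Submodule.subset_span ⟨b, hb, rfl⟩
    simp [q, Ideal.Quotient.eq_zero_iff_mem.2 this]
  · push Not at hb
    exact Submodule.subset_span ⟨⟨b, hb⟩, by simp [q, mixedMonomial_of_forall_lt hb]⟩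

/-- The standard monomials, those divisible by no leading monomial `Xᵢ ^ eᵢ` of the `gᵢ`, form a
basis of the quotient by the ideal generated by the `gᵢ`. -/
def standardMonomialBasis (hg : ∀ i, m.Monic (g i))
    (hdeg : ∀ i, m.degree (g i) = Finsupp.single i (e i)) (he : ∀ i, 0 < e i) :
    Basis {b : σ →₀ ℕ // ∀ i, b i < e i} R (MvPolynomial σ R ⧸ Ideal.span (Set.range g)) :=
  .mk (linearIndependent_mk_standardMonomial hg hdeg he)
    (span_range_mk_standardMonomial hg hdeg he).ge

theorem standardMonomialBasis_apply (hg : ∀ i, m.Monic (g i))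
    (hdeg : ∀ i, m.degree (g i) = Finsupp.single i (e i)) (he : ∀ i, 0 < e i)
    (b : {b : σ →₀ ℕ // ∀ i, b i < e i}) :
    standardMonomialBasis hg hdeg he b = Ideal.Quotient.mkₐ R _ (monomial b.1 1) :=
  Basis.mk_apply _ _ _

end StandardMonomials

section Antipode

open MvPolynomial Module

section CommRing

variable {σ R : Type*} [CommRing R]

/-- The algebra automorphism `p(X) ↦ p(-X)` of the polynomial ring induced by the antipodal map. -/
def antipode : MvPolynomial σ R →ₐ[R] MvPolynomial σ R := aeval fun i => -X i

theorem antipode_X (i : σ) : antipode (X i : MvPolynomial σ R) = -X i := aeval_X _ i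

theorem eval_antipode (x : σ → R) (p : MvPolynomial σ R) :
    eval x (antipode p) = eval (-x) p := by
  induction p using MvPolynomial.induction_on with
  | C a => simp [antipode]
  | add p q hp hq => rw [map_add, map_add, hp, hq, map_add]
  | mul_X p i hp => rw [map_mul, map_mul, hp, map_mul, antipode_X]; simp

theorem antipode_antipode (p : MvPolynomial σ R) : antipode (antipode p) = p := by
  have : (antipode.comp antipode : MvPolynomial σ R →ₐ[R] _) = AlgHom.id R _ :=
    algHom_ext fun i => by simp [antipode_X]
  exact AlgHom.congr_fun this p

theorem antipode_monomial (b : σ →₀ ℕ) (c : R) :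
    antipode (monomial b c) = (-1 : R) ^ b.degree • monomial b c := by
  have hprod : (b.prod fun i k => (-X i) ^ k : MvPolynomial σ R) =
      (-1) ^ b.degree * b.prod fun i k => X i ^ k := by
    simp only [Finsupp.prod, neg_pow (X _ : MvPolynomial σ R), prod_mul_distrib,
      prod_pow_eq_pow_sum, Finsupp.degree_apply]
  rw [antipode, aeval_monomial, hprod, monomial_eq, smul_eq_C_mul, algebraMap_eq]
  simp only [map_pow, map_neg, map_one]
  ring

end CommRing

variable {σ R : Type*} [Fintype σ] [Field R] [LinearOrder R] [IsStrictOrderedRing R]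
  [IsRealClosed R]

theorem exists_eval_eq_zero_of_antipodal {A : Type*} [CommRing A] [Algebra R A]
    [FiniteDimensional R A] {s : A →ₐ[R] A} {x : σ → A} (hsx : ∀ i, s (x i) = -x i)
    (hx : ∑ i, x i * x i = 1) (hodd : Odd (finrank R (End.eigenspace s.toLinearMap 1))) :
    ∃ a : σ → R, ∀ p, aeval x p = 0 → eval a p = 0 := by
  obtain ⟨a, w, hw, haw⟩ := exists_joint_eigenvector_of_antipodal
    (M := fun i => LinearMap.mulLeft R (x i)) (S := s.toLinearMap)
    (fun i j => LinearMap.ext fun y => mul_left_comm _ _ _)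
    (fun i => LinearMap.ext fun y => by simp [hsx])
    (LinearMap.ext fun y => by simp [← mul_assoc, ← sum_mul, hx]) hodd
  have heval (p : MvPolynomial σ R) : aeval x p * w = eval a p • w := by
    induction p using MvPolynomial.induction_on with
    | C c => simp [Algebra.smul_def]
    | add p q hp hq => rw [map_add, add_mul, hp, hq, map_add, add_smul]
    | mul_X p i hp =>
      rw [map_mul, mul_assoc, aeval_X, show x i * w = a i • w from haw i, mul_smul_comm, hp,
        map_mul, eval_X, mul_comm, mul_smul]
  exact ⟨a, fun p hp => by simpa [hp, hw] using (heval p).symm⟩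

variable {m : MonomialOrder σ} {g : σ → MvPolynomial σ R} {e : σ → ℕ}

theorem exists_common_zero_of_odd_card_even_standardMonomial (hg : ∀ i, m.Monic (g i))
    (hdeg : ∀ i, m.degree (g i) = Finsupp.single i (e i)) (he : ∀ i, 0 < e i)
    (hanti : ∀ i, antipode (g i) = g i ∨ antipode (g i) = -g i)
    (hsphere : ∑ i, X i * X i - 1 ∈ Ideal.span (Set.range g))
    (hodd : Odd (Nat.card {b : {b : σ →₀ ℕ // ∀ i, b i < e i} // Even b.1.degree})) :
    ∃ a : σ → R, ∀ i, eval a (g i) = 0 := by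
  have hI : Ideal.span (Set.range g) ≤ (Ideal.span (Set.range g)).comap (antipode (R := R)) := by
    rw [Ideal.span_le]
    rintro _ ⟨i, rfl⟩
    have hgi : g i ∈ Ideal.span (Set.range g) := Ideal.subset_span ⟨i, rfl⟩
    rcases hanti i with h | h <;> simpa [h] using hgi
  let s := Ideal.quotientMapₐ _ antipode hI
  have hs (p : MvPolynomial σ R) : s (Ideal.Quotient.mkₐ R _ p) =
    Ideal.Quotient.mkₐ R _ (antipode p) := rfl
  let B := standardMonomialBasis hg hdeg he
  classical
  have : Finite {b : σ →₀ ℕ // ∀ i, b i < e i} :=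
    (Set.finite_Icc 0 (Finsupp.equivFunOnFinite.symm e)).subset fun b hb =>
      ⟨zero_le, fun i => (hb i).le⟩
  have := Module.Finite.of_basis B
  have hfixed : Odd (finrank R (End.eigenspace s.toLinearMap 1)) := by
    rw [finrank_eigenspace_eq_natCard B (ε := fun b => (-1) ^ b.1.degree) fun b => by
      rw [standardMonomialBasis_apply, AlgHom.toLinearMap_apply, hs, antipode_monomial, map_smul]]
    simpa [neg_one_pow_eq_one_iff_even (show (-1 : R) ≠ 1 by norm_num)] using hodd
  have haeval : aeval (fun i => Ideal.Quotient.mkₐ R (Ideal.span (Set.range g)) (X i)) =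
    Ideal.Quotient.mkₐ R (Ideal.span (Set.range g)) := algHom_ext fun i => by simp
  obtain ⟨a, ha⟩ := exists_eval_eq_zero_of_antipodal (s := s)
    (x := fun i => Ideal.Quotient.mkₐ R _ (X i)) (fun i => by rw [hs, antipode_X, map_neg])
    (by simpa [sub_eq_zero] using Ideal.Quotient.eq_zero_iff_mem.2 hsphere) hfixed
  refine ⟨a, fun i => ha _ ?_⟩
  rw [haeval]
  exact Ideal.Quotient.eq_zero_iff_mem.2 (Ideal.subset_span ⟨i, rfl⟩)

theorem natCard_even_standardMonomial_cons_two (d : ℕ) :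
    Nat.card {b : {b : Fin (n + 1) →₀ ℕ //
      ∀ i, b i < (Fin.cons 2 fun _ => d : Fin (n + 1) → ℕ) i} // Even b.1.degree} = d ^ n := by
  have hdegree (b : Fin (n + 1) →₀ ℕ) : b.degree = b 0 + ∑ j : Fin n, b j.succ := by
    rw [Finsupp.degree_eq_sum, Fin.sum_univ_succ]
  let tail (b : {b : {b : Fin (n + 1) →₀ ℕ //
      ∀ i, b i < (Fin.cons 2 fun _ => d : Fin (n + 1) → ℕ) i} // Even b.1.degree}) :
      Fin n → Fin d := fun j => ⟨b.1.1 j.succ, b.1.2 j.succ⟩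
  suffices htail : tail.Bijective by
    simpa using Nat.card_congr (Equiv.ofBijective tail htail)
  refine ⟨?_, fun t => ?_⟩
  · rintro ⟨⟨b, hb⟩, hbe⟩ ⟨⟨c, hc⟩, hce⟩ h
    have hsucc (j : Fin n) : b j.succ = c j.succ := congrArg Fin.val (congrFun h j)
    have hb0 : b 0 < 2 := hb 0
    have hc0 : c 0 < 2 := hc 0
    simp only [hdegree, hsucc] at hbe hce
    have hzero : b 0 = c 0 := by
      rw [Nat.even_iff] at hbe hce
      omega
    simpa using Finsupp.ext (Fin.cases hzero hsucc)
  · let b : Fin (n + 1) →₀ ℕ :=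
      Finsupp.equivFunOnFinite.symm (Fin.cons ((∑ j, (t j : ℕ)) % 2) fun j => t j)
    refine ⟨⟨⟨b, Fin.cases (Nat.mod_lt _ two_pos) fun j => (t j).2⟩, ?_⟩, rfl⟩
    rw [hdegree, Nat.even_iff]
    simp only [Finsupp.equivFunOnFinite_symm_apply_apply, Fin.cons_zero, Fin.cons_succ,
      Nat.mod_add_mod, b]
    omega

end Antipode

section PolynomialBorsukUlam

open MvPolynomial

theorem degLex_degree_lt_of_totalDegree_lt {σ R : Type*} [LinearOrder σ] [WellFoundedGT σ]
    [CommSemiring R] {p : MvPolynomial σ R} {b : σ →₀ ℕ} (hp : p.totalDegree < b.degree) :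
    MonomialOrder.degLex.toSyn (MonomialOrder.degLex.degree p) <
      MonomialOrder.degLex.toSyn b := by
  rw [MonomialOrder.degLex_lt_iff, Finsupp.DegLex.lt_iff]
  exact .inl ((degree_degLexDegree).trans_lt hp)

variable {R : Type*}

/-- The equations `∑ Xᵢ² = 1` and `Xⱼ₊₁ ^ d + qⱼ = 0`. For `d` larger than the degrees of the `qⱼ`
their leading monomials for the degree lexicographic order are the powers `X₀²` and `Xⱼ₊₁ ^ d`. -/
def sphereSystem [CommRing R] (d : ℕ) (q : Fin n → MvPolynomial (Fin (n + 1)) R) :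
    Fin (n + 1) → MvPolynomial (Fin (n + 1)) R :=
  Fin.cons (∑ i, X i * X i - 1) fun j => X j.succ ^ d + q j

theorem degLex_degree_sphere_tail [CommRing R] [Nontrivial R] :
    MonomialOrder.degLex.toSyn (MonomialOrder.degLex.degree
      (∑ j : Fin n, X j.succ * X j.succ - 1 : MvPolynomial (Fin (n + 1)) R)) <
      MonomialOrder.degLex.toSyn (Finsupp.single 0 2) := by
  have hone : MonomialOrder.degLex.toSyn (MonomialOrder.degLex.degree
      (1 : MvPolynomial (Fin (n + 1)) R)) < MonomialOrder.degLex.toSyn (Finsupp.single 0 2) :=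
    degLex_degree_lt_of_totalDegree_lt (by simp)
  refine MonomialOrder.degree_sub_le.trans_lt (max_lt ?_ hone)
  refine MonomialOrder.degree_sum_le.trans_lt
    ((Finset.sup_lt_iff (bot_le.trans_lt hone)).2 fun j _ => ?_)
  refine MonomialOrder.degree_mul_le.trans_lt ?_
  have hj : MonomialOrder.degLex.toSyn (Finsupp.single j.succ 1) <
      MonomialOrder.degLex.toSyn (Finsupp.single 0 1) :=
    MonomialOrder.degLex_single_lt_iff.2 j.succ_pos
  rw [MonomialOrder.degree_X, show (2 : ℕ) = 1 + 1 from rfl, Finsupp.single_add, map_add, map_add]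
  exact add_lt_add hj hj

theorem degLex_sphereSystem [CommRing R] [Nontrivial R] {d : ℕ}
    {q : Fin n → MvPolynomial (Fin (n + 1)) R} (hd : ∀ j, (q j).totalDegree < d)
    (i : Fin (n + 1)) :
    MonomialOrder.degLex.Monic (sphereSystem d q i) ∧
      MonomialOrder.degLex.degree (sphereSystem d q i) =
        Finsupp.single i ((Fin.cons 2 fun _ => d : Fin (n + 1) → ℕ) i) := by
  have hmonic (i : Fin (n + 1)) (e : ℕ) :
      MonomialOrder.degLex.Monic (X i ^ e : MvPolynomial (Fin (n + 1)) R) :=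
    MonomialOrder.monic_X.pow
  have hdeg (i : Fin (n + 1)) (e : ℕ) : MonomialOrder.degLex.degree
      (X i ^ e : MvPolynomial (Fin (n + 1)) R) = Finsupp.single i e := by
    classical simp [X_pow_eq_monomial, MonomialOrder.degree_monomial]
  refine Fin.cases ?_ (fun j => ?_) i
  · have hlt := degLex_degree_sphere_tail (R := R) (n := n)
    rw [← hdeg 0 2] at hlt
    have hsplit : sphereSystem d q 0 = X 0 ^ 2 + (∑ j : Fin n, X j.succ * X j.succ - 1) := by
      rw [sphereSystem, Fin.cons_zero, Fin.sum_univ_succ]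
      ring
    rw [hsplit]
    exact ⟨(hmonic 0 2).add_of_lt hlt, (MonomialOrder.degree_add_of_lt hlt).trans (hdeg 0 2)⟩
  · have hlt := degLex_degree_lt_of_totalDegree_lt (p := q j) (b := Finsupp.single j.succ d)
      (by simpa using hd j)
    rw [← hdeg j.succ d] at hlt
    exact ⟨(hmonic j.succ d).add_of_lt hlt,
      (MonomialOrder.degree_add_of_lt hlt).trans (hdeg j.succ d)⟩

theorem exists_mem_sphere_pow_add_eval_eq_zero [Field R] [LinearOrder R] [IsStrictOrderedRing R]
    [IsRealClosed R] {d : ℕ} (hd : Odd d) {q : Fin n → MvPolynomial (Fin (n + 1)) R}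
    (hqd : ∀ j, (q j).totalDegree < d) (hq : ∀ j, antipode (q j) = -q j) :
    ∃ a : Fin (n + 1) → R, ∑ i, a i * a i = 1 ∧ ∀ j, a j.succ ^ d + eval a (q j) = 0 := by
  have hanti (i : Fin (n + 1)) : antipode (sphereSystem d q i) = sphereSystem d q i ∨
      antipode (sphereSystem d q i) = -sphereSystem d q i := by
    refine Fin.cases (.inl ?_) (fun j => .inr ?_) i
    · simp [sphereSystem, antipode_X]
    · simp [sphereSystem, antipode_X, hq, hd.neg_pow, add_comm]
  obtain ⟨a, ha⟩ := exists_common_zero_of_odd_card_even_standardMonomial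
    (fun i => (degLex_sphereSystem hqd i).1) (fun i => (degLex_sphereSystem hqd i).2)
    (Fin.cases two_pos fun _ => hd.pos) hanti (Ideal.subset_span ⟨0, rfl⟩)
    (by rw [natCard_even_standardMonomial_cons_two]; exact hd.pow)
  refine ⟨a, ?_, fun j => ?_⟩
  · simpa [sphereSystem, sub_eq_zero] using ha 0
  · simpa [sphereSystem] using ha j.succ

end PolynomialBorsukUlam

section BorsukUlam

open MvPolynomial Module Metric

theorem exists_norm_aeval_sub_lt {T ι : Type*} [TopologicalSpace T] [CompactSpace T]
    {x : ι → C(T, ℝ)} (hx : ∀ a b, a ≠ b → ∃ i, x i a ≠ x i b) (f : C(T, ℝ)) {ε : ℝ}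
    (hε : 0 < ε) : ∃ p : MvPolynomial ι ℝ, ‖aeval x p - f‖ < ε := by
  have hsep : (aeval (R := ℝ) x).range.SeparatesPoints := fun a b hab =>
    let ⟨i, hi⟩ := hx a b hab
    ⟨x i, ⟨x i, ⟨X i, aeval_X x i⟩, rfl⟩, hi⟩
  obtain ⟨⟨_, p, rfl⟩, hp⟩ :=
    ContinuousMap.exists_mem_subalgebra_near_continuousMap_of_separatesPoints _ hsep f ε hε
  exact ⟨p, hp⟩

theorem exists_abs_eval_sub_lt
    (f : C(sphere (0 : EuclideanSpace ℝ (Fin n)) 1, ℝ)) {ε : ℝ} (hε : 0 < ε) :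
    ∃ p : MvPolynomial (Fin n) ℝ, ∀ x, |eval (x.1 : Fin n → ℝ) p - f x| < ε := by
  let coord (i : Fin n) : C(sphere (0 : EuclideanSpace ℝ (Fin n)) 1, ℝ) :=
    ⟨fun x => x.1 i, by fun_prop⟩
  have hsep (a b) (hab : a ≠ b) : ∃ i, coord i a ≠ coord i b := by
    contrapose! hab
    exact Subtype.ext (PiLp.ext hab)
  obtain ⟨p, hp⟩ := exists_norm_aeval_sub_lt hsep f hε
  refine ⟨p, fun x => ?_⟩
  have heval : aeval coord p x = eval (x.1 : Fin n → ℝ) p := by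
    rw [← coe_aeval_eq_eval, ← ContinuousMap.evalAlgHom_apply ℝ, comp_aeval_apply]
    rfl
  simpa [heval] using (ContinuousMap.norm_coe_le_norm (aeval coord p - f) x).trans_lt hp

theorem exists_norm_lt_of_odd
    {f : sphere (0 : EuclideanSpace ℝ (Fin (n + 1))) 1 → Fin n → ℝ} (hf : Continuous f)
    (hodd : ∀ x, f (-x) = -f x) {ε : ℝ} (hε : 0 < ε) : ∃ x, ‖f x‖ < ε := by
  choose p hp using fun j =>
    exists_abs_eval_sub_lt ⟨fun x => f x j, by fun_prop⟩ (half_pos hε)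
  -- The odd part of `pⱼ`, rescaled so that the leading term `Xⱼ₊₁ ^ d` only perturbs it by `ε / 2`.
  let q (j : Fin n) : MvPolynomial (Fin (n + 1)) ℝ := C ε⁻¹ * (p j - antipode (p j))
  have hq (j : Fin n) : antipode (q j) = -q j := by
    have hC : antipode (C ε⁻¹ : MvPolynomial (Fin (n + 1)) ℝ) = C ε⁻¹ := antipode.commutes _
    rw [map_mul, map_sub, antipode_antipode, hC]
    ring
  have hdeg (j : Fin n) :
      (q j).totalDegree < 2 * (univ.sup fun j => (q j).totalDegree) + 1 := by
    have := Finset.le_sup (f := fun j => (q j).totalDegree) (mem_univ j)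
    omega
  obtain ⟨a, hsphere, ha⟩ := exists_mem_sphere_pow_add_eval_eq_zero
    (odd_two_mul_add_one _) hdeg hq
  have hnorm : ‖WithLp.toLp 2 a‖ = 1 := by
    simpa [EuclideanSpace.norm_eq, ← sq] using hsphere
  let x : sphere (0 : EuclideanSpace ℝ (Fin (n + 1))) 1 :=
    ⟨WithLp.toLp 2 a, mem_sphere_zero_iff_norm.2 hnorm⟩
  refine ⟨x, (pi_norm_lt_iff hε).2 fun j => ?_⟩
  generalize 2 * (univ.sup fun j => (q j).totalDegree) + 1 = d at ha
  have hpow : |a j.succ ^ d| ≤ 1 := by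
    rw [abs_pow]
    exact pow_le_one₀ (abs_nonneg _) (hnorm ▸ PiLp.norm_apply_le (WithLp.toLp 2 a) j.succ)
  have hpos : |eval a (p j) - f x j| < ε / 2 := hp j x
  have hneg : |eval (-a) (p j) - -f x j| < ε / 2 := by
    rw [← Pi.neg_apply, ← hodd]
    exact hp j (-x)
  have hzero : eval a (p j) - eval (-a) (p j) = -(ε * a j.succ ^ d) := by
    have := ha j
    simp only [q, map_mul, map_sub, eval_C, eval_antipode] at this
    field_simp at this
    linarith
  rw [abs_lt] at hpos hneg
  rw [abs_le] at hpow
  rw [Real.norm_eq_abs, abs_lt]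
  constructor <;> nlinarith

theorem borsuk_ulam_euclidean
    {f : sphere (0 : EuclideanSpace ℝ (Fin (n + 1))) 1 → Fin n → ℝ} (hf : Continuous f)
    (hodd : ∀ x, f (-x) = -f x) : ∃ x, f x = 0 := by
  have : Nonempty (sphere (0 : EuclideanSpace ℝ (Fin (n + 1))) 1) :=
    (NormedSpace.sphere_nonempty.2 zero_le_one).to_subtype
  obtain ⟨x, hx⟩ := hf.norm.exists_forall_le (by simp)
  by_contra! h
  obtain ⟨y, hy⟩ := exists_norm_lt_of_odd hf hodd (norm_pos_iff.2 (h x))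
  exact (hx y).not_gt hy

theorem borsuk_ulam {E F : Type*} [NormedAddCommGroup E] [NormedSpace ℝ E]
    [NormedAddCommGroup F] [NormedSpace ℝ F] [FiniteDimensional ℝ E] [FiniteDimensional ℝ F]
    (hEF : finrank ℝ F < finrank ℝ E) {f : sphere (0 : E) 1 → F} (hf : Continuous f)
    (hodd : ∀ x, f (-x) = -f x) : ∃ x, f x = 0 := by
  obtain ⟨L, hL⟩ := (finrank_le_iff_exists_linearMap (R := ℝ)
    (M := EuclideanSpace ℝ (Fin (finrank ℝ F + 1))) (M' := E)).1 (by simpa using hEF)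
  have hLx (x : sphere (0 : EuclideanSpace ℝ (Fin (finrank ℝ F + 1))) 1) : L x ≠ 0 := by
    rw [map_ne_zero_iff L hL]
    exact ne_zero_of_mem_unit_sphere x
  let N (x : sphere (0 : EuclideanSpace ℝ (Fin (finrank ℝ F + 1))) 1) : sphere (0 : E) 1 :=
    ⟨NormedSpace.normalize (L x), by simpa using NormedSpace.norm_normalize (hLx x)⟩
  have hN : Continuous N := by
    have hcont := L.continuous_of_finiteDimensional.comp (continuous_subtype_val
      (p := (· ∈ sphere (0 : EuclideanSpace ℝ (Fin (finrank ℝ F + 1))) 1)))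
    exact ((hcont.norm.inv₀ fun x => norm_ne_zero_iff.2 (hLx x)).smul hcont).subtype_mk _
  have hNodd (x) : N (-x) = -N x := Subtype.ext (by simp [N, NormedSpace.normalize_neg])
  let e : F ≃L[ℝ] (Fin (finrank ℝ F) → ℝ) := ContinuousLinearEquiv.ofFinrankEq (by simp)
  obtain ⟨x, hx⟩ := borsuk_ulam_euclidean (f := fun x => e (f (N x)))
    (e.continuous.comp (hf.comp hN)) fun x => by rw [hNodd, hodd, map_neg]
  exact ⟨N x, e.map_eq_zero_iff.1 hx⟩

end BorsukUlam

section Genus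

open Module Metric

variable {A : Set (Fin n → ℝ)} {k l : ℕ} {V : Submodule ℝ (Fin n → ℝ)}
  {Θ : (Fin n → ℝ) ≃ₜ (Fin n → ℝ)}

theorem GenusGe.mono (hA : GenusGe A l) (hkl : k ≤ l) : GenusGe A k :=
  fun m hm => hkl.trans (hA m hm)

theorem genusGe_range_of_odd {E : Type*} [NormedAddCommGroup E] [NormedSpace ℝ E]
    [FiniteDimensional ℝ E] {ψ : sphere (0 : E) 1 → Fin n → ℝ} (hψ : Continuous ψ)
    (hodd : ∀ x, ψ (-x) = -ψ x) : GenusGe (Set.range ψ) (finrank ℝ E) := by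
  rintro m ⟨f, hf, hfodd, hfne⟩
  by_contra! hm
  obtain ⟨x, hx⟩ := borsuk_ulam (F := Fin m → ℝ) (by simpa using hm)
    (hf.comp_continuous hψ fun x => ⟨x, rfl⟩) fun x =>
      (congrArg f (hodd x)).trans (hfodd _ ⟨x, rfl⟩)
  exact hfne _ ⟨x, rfl⟩ hx

theorem GenusGe.exists_mem_submodule (hA : GenusGe A k) (hkV : n < k + finrank ℝ V)
    {f : (Fin n → ℝ) → Fin n → ℝ} (hf : ContinuousOn f A) (hodd : ∀ x ∈ A, f (-x) = -f x) :
    ∃ x ∈ A, f x ∈ V := by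
  let e : ((Fin n → ℝ) ⧸ V) ≃ₗ[ℝ] (Fin (finrank ℝ ((Fin n → ℝ) ⧸ V)) → ℝ) :=
    LinearEquiv.ofFinrankEq _ _ (by simp)
  let g := e.toLinearMap ∘ₗ V.mkQ
  have hg (y) : g y = 0 ↔ y ∈ V := by simp [g]
  by_contra! hV
  have hgf : HasOddMap A (finrank ℝ ((Fin n → ℝ) ⧸ V)) :=
    ⟨fun x => g (f x), g.continuous_of_finiteDimensional.comp_continuousOn hf,
      fun x hx => (congrArg g (hodd x hx)).trans (map_neg g _),
      fun x hx => (hg _).not.2 (hV x hx)⟩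
  have hdim := V.finrank_quotient_add_finrank
  rw [finrank_fin_fun] at hdim
  have := hA _ hgf
  omega

theorem minimaxVal_le_of_submodule {Φ : (Fin n → ℝ) → ℝ} {r : ℝ} (hΦ : ∀ x, 0 ≤ Φ x)
    (hΘ : ∀ x, Θ (-x) = -Θ x) (hkV : k ≤ finrank ℝ V) (hr : 0 ≤ r)
    (h : ∀ y ∈ V, y ≠ 0 → Φ (Θ y) ≤ r) : minimaxVal Φ k ≤ r := by
  let ψ (y : sphere (0 : V) 1) : Fin n → ℝ := Θ y
  have hψ : Continuous ψ := by fun_prop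
  have hψodd (y) : ψ (-y) = -ψ y := hΘ y
  have hΘ0 : Θ 0 = 0 := self_eq_neg.1 (by simpa using hΘ 0)
  have hbdd : BddBelow {r : ℝ | ∃ A : Set (Fin n → ℝ), IsCompact A ∧ (∀ x ∈ A, -x ∈ A) ∧
      (0 : Fin n → ℝ) ∉ A ∧ GenusGe A k ∧ r = sSup (Φ '' A)} := by
    refine ⟨0, ?_⟩
    rintro _ ⟨A, -, -, -, -, rfl⟩
    exact Real.sSup_nonneg (by rintro _ ⟨x, -, rfl⟩; exact hΦ x)
  have hne (y : sphere (0 : V) 1) : (y : Fin n → ℝ) ≠ 0 := by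
    simpa using ne_zero_of_mem_unit_sphere y
  refine (csInf_le hbdd ⟨Set.range ψ, isCompact_range hψ, ?_, ?_,
    (genusGe_range_of_odd hψ hψodd).mono hkV, rfl⟩).trans (Real.sSup_le ?_ hr)
  · rintro _ ⟨y, rfl⟩
    exact ⟨-y, hψodd y⟩
  · rintro ⟨y, hy⟩
    exact hne y (Θ.injective (hy.trans hΘ0.symm))
  · rintro _ ⟨_, ⟨y, rfl⟩, rfl⟩
    exact h _ y.1.2 (hne y)

theorem le_minimaxVal_of_submodule {Φ : (Fin n → ℝ) → ℝ} {r : ℝ}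
    (hΦ : BddAbove (Set.range Φ)) (hΘ : ∀ x, Θ (-x) = -Θ x) (hkn : k ≤ n)
    (hkV : n < k + finrank ℝ V) (h : ∀ y ∈ V, y ≠ 0 → r ≤ Φ (Θ y)) : r ≤ minimaxVal Φ k := by
  have hΘ0 : Θ 0 = 0 := self_eq_neg.1 (by simpa using hΘ 0)
  have hsymm (x) : Θ.symm (-x) = -Θ.symm x := by
    rw [Homeomorph.symm_apply_eq, hΘ, Θ.apply_symm_apply]
  refine le_csInf ?_ ?_
  · let ψ (y : sphere (0 : Fin n → ℝ) 1) : Fin n → ℝ := y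
    have hgenus : GenusGe (Set.range ψ) k :=
      (genusGe_range_of_odd (by fun_prop) fun _ => rfl).mono (by simpa using hkn)
    refine ⟨_, Set.range ψ, isCompact_range (by fun_prop), ?_, ?_, hgenus, rfl⟩
    · rintro _ ⟨y, rfl⟩
      exact ⟨-y, rfl⟩
    · rintro ⟨y, hy⟩
      exact ne_zero_of_mem_unit_sphere y hy
  · rintro _ ⟨A, -, -, hA0, hA, rfl⟩
    obtain ⟨x, hxA, hxV⟩ := hA.exists_mem_submodule hkV Θ.symm.continuous.continuousOn
      fun x _ => hsymm x
    have hx0 : Θ.symm x ≠ 0 := by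
      rw [Ne, Homeomorph.symm_apply_eq, hΘ0]
      exact fun hx => hA0 (hx ▸ hxA)
    have hrx := h _ hxV hx0
    rw [Θ.apply_symm_apply] at hrx
    exact hrx.trans (le_csSup (hΦ.mono (Set.image_subset_range _ _)) ⟨x, hxA, rfl⟩)

end Genus

section Spectral

open Module Matrix

theorem exists_equiv_comp_eq_of_map_univ_eq {ι κ α : Type*} [Fintype ι] [Fintype κ] {f : ι → α}
    {g : κ → α} (h : (univ : Finset ι).val.map f = (univ : Finset κ).val.map g) :
    ∃ e : ι ≃ κ, g ∘ e = f := by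
  classical
  have hcard (a : α) : Fintype.card {i // f i = a} = Fintype.card {j // g j = a} := by
    have := congrArg (Multiset.count a) h
    simpa only [Multiset.count_map, eq_comm (a := a), Fintype.card_subtype, card_def,
      filter_val] using this
  let e := Equiv.ofFiberEquiv fun a => Fintype.equivOfCardEq (hcard a)
  exact ⟨e, funext fun i => Equiv.ofFiberEquiv_map _ i⟩

theorem exists_orthonormalBasis_mulVec_eq_smul {ι : Type*} [Fintype ι] [DecidableEq ι]
    {L : Matrix ι ι ℝ} (hL : L.IsHermitian) {lam : ι → ℝ}
    (hlam : (univ : Finset ι).val.map lam = L.charpoly.roots) :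
    ∃ B : OrthonormalBasis ι ℝ (EuclideanSpace ℝ ι), ∀ i, L *ᵥ (B i).ofLp = lam i • (B i).ofLp := by
  obtain ⟨e, he⟩ := exists_equiv_comp_eq_of_map_univ_eq
    (hlam.trans hL.roots_charpoly_eq_eigenvalues)
  refine ⟨hL.eigenvectorBasis.reindex e.symm, fun i => ?_⟩
  rw [← he]
  simpa using hL.mulVec_eigenvectorBasis (e i)

theorem exists_linearEquiv_diagonalizing {ι : Type*} [Fintype ι] [DecidableEq ι]
    {L : Matrix ι ι ℝ} (hL : L.IsHermitian) {lam : ι → ℝ}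
    (hlam : (univ : Finset ι).val.map lam = L.charpoly.roots) :
    ∃ C : (ι → ℝ) ≃ₗ[ℝ] (ι → ℝ), ∀ y, ∑ i, C y i ^ 2 = y ⬝ᵥ y ∧
      ∑ i, lam i * C y i ^ 2 = y ⬝ᵥ L *ᵥ y := by
  obtain ⟨B, hB⟩ := exists_orthonormalBasis_mulVec_eq_smul hL hlam
  let C := (WithLp.linearEquiv 2 ℝ (ι → ℝ)).symm ≪≫ₗ B.repr.toLinearEquiv ≪≫ₗ
    WithLp.linearEquiv 2 ℝ (ι → ℝ)
  have hC (y : ι → ℝ) (i : ι) : C y i = inner ℝ (B i) (WithLp.toLp 2 y) := B.repr_apply_apply _ i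
  have hCL (y : ι → ℝ) (i : ι) : C (L *ᵥ y) i = lam i * C y i := by
    have hself : (B i).ofLp ᵥ* L = lam i • (B i).ofLp := by
      rw [← mulVec_transpose, ← conjTranspose_eq_transpose_of_trivial, hL.eq, hB]
    simp only [hC, EuclideanSpace.inner_eq_star_dotProduct, star_trivial]
    rw [dotProduct_comm, dotProduct_mulVec, hself, smul_dotProduct, smul_eq_mul, dotProduct_comm]
  have hdot (x y : ι → ℝ) : ∑ i, C x i * C y i = x ⬝ᵥ y := by
    simp only [hC, real_inner_comm (WithLp.toLp 2 x) (B _)]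
    rw [B.sum_inner_mul_inner, EuclideanSpace.inner_toLp_toLp, star_trivial, dotProduct_comm]
  refine ⟨C, fun y => ⟨?_, ?_⟩⟩
  · simp only [sq, hdot]
  · rw [← hdot]
    exact sum_congr rfl fun i _ => by rw [hCL]; ring

theorem exists_submodule_finrank_eq_card {K M ι : Type*} [Ring K] [StrongRankCondition K]
    [AddCommGroup M] [Module K M] [Finite ι] (C : M ≃ₗ[K] (ι → K)) (s : Finset ι) :
    ∃ V : Submodule K M, finrank K V = #s ∧ ∀ x ∈ V, ∀ i ∉ s, C x i = 0 := by
  classical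
  have := Fintype.ofFinite ι
  let W : Submodule K (ι → K) := ⨅ i ∈ (↑sᶜ : Set ι), LinearMap.ker (LinearMap.proj i)
  refine ⟨W.map (C.symm : (ι → K) →ₗ[K] M), ?_, ?_⟩
  · have hW : finrank K W = Fintype.card s :=
      (LinearMap.iInfKerProjEquiv (I := (↑s : Set ι)) K (fun _ => K)
        (by rw [coe_compl]; exact disjoint_compl_right) (by simp)).finrank_eq.trans (finrank_pi K)
    rw [LinearEquiv.finrank_map_eq, hW, Fintype.card_coe]
  · rintro _ ⟨y, hy, rfl⟩ i hi
    simp only [W, SetLike.mem_coe, Submodule.mem_iInf, LinearMap.mem_ker] at hy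
    simpa using hy i (by simpa using hi)

end Spectral

section SignedSquare

/-- The odd homeomorphism `t ↦ t|t|` of the line. Applied coordinatewise it turns the `ℓ¹`-type
Rayleigh quotient of `Δ₁⁺` into one comparable with the quadratic Rayleigh quotient. -/
def signedSq : ℝ ≃ₜ ℝ where
  toFun t := t * |t|
  invFun t := √t - √(-t)
  left_inv t := by
    rcases le_total 0 t with ht | ht
    · simp [abs_of_nonneg ht, Real.sqrt_mul_self ht, Real.sqrt_eq_zero_of_nonpos, mul_nonneg ht ht]
    · dsimp only
      rw [abs_of_nonpos ht, mul_neg, neg_neg, ← neg_mul_neg t t,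
        Real.sqrt_mul_self (neg_nonneg.2 ht),
        Real.sqrt_eq_zero_of_nonpos (neg_nonpos.2 (mul_self_nonneg _))]
      ring
  right_inv t := by
    rcases le_total 0 t with ht | ht
    · simp [Real.sqrt_eq_zero_of_nonpos (neg_nonpos.2 ht), Real.mul_self_sqrt ht,
        abs_of_nonneg (Real.sqrt_nonneg t)]
    · simp [Real.sqrt_eq_zero_of_nonpos ht, Real.mul_self_sqrt (neg_nonneg.2 ht),
        abs_of_nonneg (Real.sqrt_nonneg (-t))]
  continuous_toFun := by fun_prop
  continuous_invFun := by fun_prop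

theorem signedSq_apply (t : ℝ) : signedSq t = t * |t| := rfl

theorem signedSq_neg (t : ℝ) : signedSq (-t) = -signedSq t := by
  rw [signedSq_apply, signedSq_apply, abs_neg, neg_mul]

theorem abs_signedSq (t : ℝ) : |signedSq t| = t ^ 2 := by
  rw [signedSq_apply, abs_mul, abs_abs, abs_mul_abs_self, sq]

theorem sq_add_le_two_mul_abs_signedSq_add (a b : ℝ) :
    (a + b) ^ 2 ≤ 2 * |signedSq a + signedSq b| := by
  simp only [signedSq_apply]
  have h₁ := le_abs_self (a * |a| + b * |b|)
  have h₂ := neg_le_abs (a * |a| + b * |b|)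
  rcases abs_cases a with ⟨ha, _⟩ | ⟨ha, _⟩ <;> rcases abs_cases b with ⟨hb, _⟩ | ⟨hb, _⟩ <;>
    rw [ha, hb] at h₁ h₂ ⊢
  · nlinarith [sq_nonneg (a - b)]
  · rcases le_total 0 (a + b) with _ | _ <;> nlinarith
  · rcases le_total 0 (a + b) with _ | _ <;> nlinarith
  · nlinarith [sq_nonneg (a - b)]

theorem abs_signedSq_add_le (a b : ℝ) :
    |signedSq a + signedSq b| ≤ |a + b| * (|a| + |b|) := by
  simp only [signedSq_apply]
  have h₁ := le_abs_self (a + b)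
  have h₂ := neg_le_abs (a + b)
  rcases abs_cases a with ⟨ha, _⟩ | ⟨ha, _⟩ <;> rcases abs_cases b with ⟨hb, _⟩ | ⟨hb, _⟩ <;>
    rw [ha, hb, abs_le] <;> constructor <;> nlinarith

end SignedSquare

section GraphEnergy

variable (G : SimpleGraph (Fin n)) [DecidableRel G.Adj]

/-- The squared weighted norm `∑ dᵢ xᵢ²`, the denominator of the quadratic Rayleigh quotient. -/
def degNormSq (x : Fin n → ℝ) : ℝ := ∑ i, degR G i * x i ^ 2

/-- The numerator `∑ (xᵢ + xⱼ)²`, over the edges, of the quadratic Rayleigh quotient; as for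
`IplusU`, each edge is counted in both directions and the sum is halved. -/
def signlessEnergy (x : Fin n → ℝ) : ℝ :=
  (∑ p : Fin n × Fin n with G.Adj p.1 p.2, (x p.1 + x p.2) ^ 2) / 2

theorem sum_adj_eq_sum_filter (f : Fin n → Fin n → ℝ) :
    (∑ i, ∑ j, if G.Adj i j then f i j else 0) =
      ∑ p : Fin n × Fin n with G.Adj p.1 p.2, f p.1 p.2 := by
  rw [sum_filter, Fintype.sum_prod_type]

theorem sum_adj_fst (u : Fin n → ℝ) :
    ∑ p : Fin n × Fin n with G.Adj p.1 p.2, u p.1 = ∑ i, degR G i * u i := by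
  rw [← sum_adj_eq_sum_filter G fun i _ => u i]
  refine sum_congr rfl fun i _ => ?_
  rw [← sum_filter, sum_const, nsmul_eq_mul, degR, ← G.card_neighborFinset_eq_degree,
    G.neighborFinset_eq_filter]

theorem sum_adj_snd (u : Fin n → ℝ) :
    ∑ p : Fin n × Fin n with G.Adj p.1 p.2, u p.2 = ∑ i, degR G i * u i := by
  rw [← sum_adj_fst, ← sum_adj_eq_sum_filter G fun _ j => u j,
    ← sum_adj_eq_sum_filter G fun i _ => u i, sum_comm]
  simp only [G.adj_comm]

theorem iplusU_eq_sum (x : Fin n → ℝ) :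
    IplusU G x = (∑ p : Fin n × Fin n with G.Adj p.1 p.2, |x p.1 + x p.2|) / 2 := by
  rw [IplusU, sum_adj_eq_sum_filter G fun i j => |x i + x j|]

theorem signlessEnergy_nonneg (x : Fin n → ℝ) : 0 ≤ signlessEnergy G x :=
  div_nonneg (sum_nonneg fun _ _ => sq_nonneg _) zero_le_two

theorem signlessEnergy_eq (x : Fin n → ℝ) : signlessEnergy G x =
    degNormSq G x + ∑ p : Fin n × Fin n with G.Adj p.1 p.2, x p.1 * x p.2 := by
  have hexpand (p : Fin n × Fin n) :
      (x p.1 + x p.2) ^ 2 = x p.1 ^ 2 + x p.2 ^ 2 + 2 * (x p.1 * x p.2) := by ring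
  simp only [signlessEnergy, hexpand, sum_add_distrib, ← mul_sum]
  rw [sum_adj_fst G fun i => x i ^ 2, sum_adj_snd G fun i => x i ^ 2, degNormSq]
  ring

theorem iplusU_nonneg (x : Fin n → ℝ) : 0 ≤ IplusU G x := by
  rw [iplusU_eq_sum]
  exact div_nonneg (sum_nonneg fun _ _ => abs_nonneg _) zero_le_two

theorem iplusU_le (x : Fin n → ℝ) : IplusU G x ≤ ∑ i, degR G i * |x i| := by
  rw [iplusU_eq_sum, div_le_iff₀ two_pos]
  calc ∑ p : Fin n × Fin n with G.Adj p.1 p.2, |x p.1 + x p.2|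
      ≤ ∑ p : Fin n × Fin n with G.Adj p.1 p.2, (|x p.1| + |x p.2|) :=
        sum_le_sum fun _ _ => abs_add_le _ _
    _ = (∑ i, degR G i * |x i|) * 2 := by
        rw [sum_add_distrib, sum_adj_fst G fun i => |x i|, sum_adj_snd G fun i => |x i|, mul_two]

theorem sum_degR_mul_abs_nonneg (x : Fin n → ℝ) : 0 ≤ ∑ i, degR G i * |x i| :=
  (iplusU_nonneg G x).trans (iplusU_le G x)

theorem rayleighPlus_nonneg (x : Fin n → ℝ) : 0 ≤ RayleighPlus G x :=
  div_nonneg (iplusU_nonneg G x) (sum_degR_mul_abs_nonneg G x)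

theorem rayleighPlus_le_one (x : Fin n → ℝ) : RayleighPlus G x ≤ 1 :=
  div_le_one_of_le₀ (iplusU_le G x) (sum_degR_mul_abs_nonneg G x)

/-- The coordinatewise signed square `x ↦ (xᵢ|xᵢ|)ᵢ` as a homeomorphism of `ℝⁿ`. -/
def piSignedSq : (Fin n → ℝ) ≃ₜ (Fin n → ℝ) := Homeomorph.piCongrRight fun _ => signedSq

theorem piSignedSq_neg (x : Fin n → ℝ) : piSignedSq (-x) = -piSignedSq x :=
  funext fun i => signedSq_neg (x i)

theorem rayleighPlus_piSignedSq (x : Fin n → ℝ) :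
    RayleighPlus G (piSignedSq x) = IplusU G (piSignedSq x) / degNormSq G x := by
  rw [RayleighPlus, degNormSq]
  exact congrArg _ (sum_congr rfl fun i _ => congrArg _ (abs_signedSq (x i)))

theorem signlessEnergy_le_two_mul_iplusU (x : Fin n → ℝ) :
    signlessEnergy G x ≤ 2 * IplusU G (piSignedSq x) := by
  have h := sum_le_sum fun (p : Fin n × Fin n) (_ : p ∈ ({p | G.Adj p.1 p.2} : Finset _)) =>
    sq_add_le_two_mul_abs_signedSq_add (x p.1) (x p.2)
  rw [← mul_sum] at h
  rw [iplusU_eq_sum, signlessEnergy, div_le_iff₀ two_pos]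
  exact h.trans_eq (by rw [mul_assoc, div_mul_cancel₀ _ two_ne_zero]; rfl)

theorem iplusU_piSignedSq_sq_le (x : Fin n → ℝ) :
    IplusU G (piSignedSq x) ^ 2 ≤ 2 * signlessEnergy G x * degNormSq G x := by
  let E : Finset (Fin n × Fin n) := {p | G.Adj p.1 p.2}
  have hI : 2 * IplusU G (piSignedSq x) ≤
      ∑ p ∈ E, |x p.1 + x p.2| * (|x p.1| + |x p.2|) := by
    rw [iplusU_eq_sum, mul_div_cancel₀ _ two_ne_zero]
    exact sum_le_sum fun p _ => abs_signedSq_add_le (x p.1) (x p.2)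
  have hnorm : ∑ p ∈ E, (|x p.1| + |x p.2|) ^ 2 ≤ 4 * degNormSq G x := by
    calc ∑ p ∈ E, (|x p.1| + |x p.2|) ^ 2 ≤ ∑ p ∈ E, 2 * (x p.1 ^ 2 + x p.2 ^ 2) :=
          sum_le_sum fun p _ => by simpa only [sq_abs] using add_sq_le (a := |x p.1|) (b := |x p.2|)
      _ = 4 * degNormSq G x := by
          rw [← mul_sum, sum_add_distrib, sum_adj_fst G fun i => x i ^ 2,
            sum_adj_snd G fun i => x i ^ 2, degNormSq]
          ring
  have hE : ∑ p ∈ E, |x p.1 + x p.2| ^ 2 = 2 * signlessEnergy G x := by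
    simp only [sq_abs, signlessEnergy, E]
    ring
  have hsq : (2 * IplusU G (piSignedSq x)) ^ 2 ≤ 2 * signlessEnergy G x * (4 * degNormSq G x) :=
    calc (2 * IplusU G (piSignedSq x)) ^ 2
        ≤ (∑ p ∈ E, |x p.1 + x p.2| * (|x p.1| + |x p.2|)) ^ 2 :=
          pow_le_pow_left₀ (mul_nonneg zero_le_two (iplusU_nonneg G _)) hI 2
      _ ≤ (∑ p ∈ E, |x p.1 + x p.2| ^ 2) * ∑ p ∈ E, (|x p.1| + |x p.2|) ^ 2 :=
          sum_mul_sq_le_sq_mul_sq _ _ _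
      _ ≤ 2 * signlessEnergy G x * (4 * degNormSq G x) := by
          rw [hE]
          exact mul_le_mul_of_nonneg_left hnorm
            (mul_nonneg zero_le_two (signlessEnergy_nonneg G x))
  linarith

end GraphEnergy

section NormalizedLaplacian

open Matrix Module

variable {G : SimpleGraph (Fin n)} [DecidableRel G.Adj]

theorem degR_pos (hiso : ∀ i, 0 < G.degree i) (i : Fin n) : 0 < degR G i :=
  Nat.cast_pos.2 (hiso i)

theorem degNormSq_pos (hiso : ∀ i, 0 < G.degree i) {x : Fin n → ℝ} (hx : x ≠ 0) :
    0 < degNormSq G x := by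
  obtain ⟨i, hi⟩ := Function.ne_iff.1 hx
  exact sum_pos' (fun j _ => mul_nonneg (degR_pos hiso j).le (sq_nonneg _))
    ⟨i, mem_univ i, mul_pos (degR_pos hiso i) (sq_pos_of_ne_zero hi)⟩

theorem isHermitian_normLap : (normLap G).IsHermitian := by
  refine isHermitian_one.sub (IsHermitian.ext fun i j => ?_)
  simp only [of_apply, star_trivial, G.adj_comm i j, mul_comm]

theorem normLap_mulVec_sqrt_degR_mul (hiso : ∀ i, 0 < G.degree i) (x : Fin n → ℝ) (i : Fin n) :
    √(degR G i) * (normLap G *ᵥ fun j => √(degR G j) * x j) i =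
      degR G i * x i - ∑ j, if G.Adj i j then x j else 0 := by
  have hsqrt (j : Fin n) : √(degR G j) ≠ 0 := (Real.sqrt_pos.2 (degR_pos hiso j)).ne'
  rw [normLap, sub_mulVec, one_mulVec, Pi.sub_apply, mul_sub, ← mul_assoc,
    Real.mul_self_sqrt (degR_pos hiso i).le, mulVec, dotProduct, mul_sum]
  congr 1
  refine sum_congr rfl fun j _ => ?_
  have := hsqrt i
  have := hsqrt j
  rw [of_apply]
  split_ifs
  · field_simp
  · simp

theorem dotProduct_normLap_mulVec (hiso : ∀ i, 0 < G.degree i) (x : Fin n → ℝ) :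
    (fun i => √(degR G i) * x i) ⬝ᵥ normLap G *ᵥ (fun i => √(degR G i) * x i) =
      2 * degNormSq G x - signlessEnergy G x := by
  rw [signlessEnergy_eq, ← sum_adj_eq_sum_filter G fun i j => x i * x j, degNormSq]
  have hrow (i : Fin n) : √(degR G i) * x i * (normLap G *ᵥ fun j => √(degR G j) * x j) i =
      degR G i * x i ^ 2 - ∑ j, if G.Adj i j then x i * x j else 0 := by
    rw [mul_right_comm, normLap_mulVec_sqrt_degR_mul hiso, sub_mul, sum_mul]
    simp only [ite_mul, zero_mul, mul_comm (x _) (x i)]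
    ring
  rw [dotProduct, sum_congr rfl fun i _ => hrow i, sum_sub_distrib]
  ring

theorem exists_linearEquiv_diagonalizing_signlessEnergy (hiso : ∀ i, 0 < G.degree i)
    {lam : Fin n → ℝ} (hlam : (univ : Finset (Fin n)).val.map lam = (normLap G).charpoly.roots) :
    ∃ C : (Fin n → ℝ) ≃ₗ[ℝ] (Fin n → ℝ), ∀ x, ∑ i, C x i ^ 2 = degNormSq G x ∧
      ∑ i, (2 - lam i) * C x i ^ 2 = signlessEnergy G x := by
  obtain ⟨C, hC⟩ := exists_linearEquiv_diagonalizing isHermitian_normLap hlam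
  let D : (Fin n → ℝ) ≃ₗ[ℝ] (Fin n → ℝ) := LinearEquiv.piCongrRight fun i =>
    LinearEquiv.smulOfNeZero ℝ ℝ (√(degR G i)) (Real.sqrt_pos.2 (degR_pos hiso i)).ne'
  refine ⟨D ≪≫ₗ C, fun x => ?_⟩
  have hD : D x = fun i => √(degR G i) * x i := rfl
  have hDD : D x ⬝ᵥ D x = degNormSq G x := by
    rw [hD, dotProduct, degNormSq]
    exact sum_congr rfl fun i _ => by
      rw [mul_mul_mul_comm, Real.mul_self_sqrt (degR_pos hiso i).le, sq]
  obtain ⟨hnorm, henergy⟩ := hC (D x)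
  rw [hDD] at hnorm
  rw [hD, dotProduct_normLap_mulVec hiso, ← hD] at henergy
  refine ⟨hnorm, ?_⟩
  simp only [LinearEquiv.trans_apply, sub_mul, sum_sub_distrib, ← mul_sum, hnorm, henergy]
  ring

variable {lam : Fin n → ℝ}

theorem le_two_of_charpoly_roots_normLap (hiso : ∀ i, 0 < G.degree i)
    (hlam : (univ : Finset (Fin n)).val.map lam = (normLap G).charpoly.roots) (i : Fin n) :
    lam i ≤ 2 := by
  obtain ⟨C, hC⟩ := exists_linearEquiv_diagonalizing_signlessEnergy hiso hlam
  have h := signlessEnergy_nonneg G (C.symm (Pi.single i 1))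
  rw [← (hC _).2, C.apply_symm_apply] at h
  simpa [Pi.single_apply] using h

theorem exists_submodule_signlessEnergy_eq_sum (hiso : ∀ i, 0 < G.degree i)
    (hlam : (univ : Finset (Fin n)).val.map lam = (normLap G).charpoly.roots)
    (s : Finset (Fin n)) :
    ∃ V : Submodule ℝ (Fin n → ℝ), finrank ℝ V = #s ∧ ∀ x ∈ V, ∃ c : Fin n → ℝ,
      degNormSq G x = ∑ i ∈ s, c i ^ 2 ∧ signlessEnergy G x = ∑ i ∈ s, (2 - lam i) * c i ^ 2 := by
  obtain ⟨C, hC⟩ := exists_linearEquiv_diagonalizing_signlessEnergy hiso hlam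
  obtain ⟨V, hV, hzero⟩ := exists_submodule_finrank_eq_card C s
  refine ⟨V, hV, fun x hx => ⟨C x, ?_, ?_⟩⟩
  · rw [← (hC x).1]
    exact (sum_subset (subset_univ s) fun i _ hi => by simp [hzero x hx i hi]).symm
  · rw [← (hC x).2]
    exact (sum_subset (subset_univ s) fun i _ hi => by simp [hzero x hx i hi]).symm

theorem exists_submodule_signlessEnergy_le (hiso : ∀ i, 0 < G.degree i)
    (hlam : (univ : Finset (Fin n)).val.map lam = (normLap G).charpoly.roots)
    {s : Finset (Fin n)} {μ : ℝ} (hμ : ∀ i ∈ s, 2 - lam i ≤ μ) :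
    ∃ V : Submodule ℝ (Fin n → ℝ), finrank ℝ V = #s ∧
      ∀ x ∈ V, signlessEnergy G x ≤ μ * degNormSq G x := by
  obtain ⟨V, hV, hsum⟩ := exists_submodule_signlessEnergy_eq_sum hiso hlam s
  refine ⟨V, hV, fun x hx => ?_⟩
  obtain ⟨c, hnorm, henergy⟩ := hsum x hx
  rw [hnorm, henergy, mul_sum]
  exact sum_le_sum fun i hi => mul_le_mul_of_nonneg_right (hμ i hi) (sq_nonneg _)

theorem exists_submodule_le_signlessEnergy (hiso : ∀ i, 0 < G.degree i)
    (hlam : (univ : Finset (Fin n)).val.map lam = (normLap G).charpoly.roots)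
    {s : Finset (Fin n)} {μ : ℝ} (hμ : ∀ i ∈ s, μ ≤ 2 - lam i) :
    ∃ V : Submodule ℝ (Fin n → ℝ), finrank ℝ V = #s ∧
      ∀ x ∈ V, μ * degNormSq G x ≤ signlessEnergy G x := by
  obtain ⟨V, hV, hsum⟩ := exists_submodule_signlessEnergy_eq_sum hiso hlam s
  refine ⟨V, hV, fun x hx => ?_⟩
  obtain ⟨c, hnorm, henergy⟩ := hsum x hx
  rw [hnorm, henergy, mul_sum]
  exact sum_le_sum fun i hi => mul_le_mul_of_nonneg_right (hμ i hi) (sq_nonneg _)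

theorem ckSignless_le_sqrt (hiso : ∀ i, 0 < G.degree i) {k : ℕ} {μ : ℝ}
    {V : Submodule ℝ (Fin n → ℝ)} (hkV : k ≤ finrank ℝ V)
    (hV : ∀ x ∈ V, signlessEnergy G x ≤ μ * degNormSq G x) : ckSignless G k ≤ √(2 * μ) := by
  refine minimaxVal_le_of_submodule (rayleighPlus_nonneg G) piSignedSq_neg hkV
    (Real.sqrt_nonneg _) fun x hx hx0 => ?_
  have hpos := degNormSq_pos hiso hx0
  rw [rayleighPlus_piSignedSq]
  refine Real.le_sqrt_of_sq_le ?_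
  rw [div_pow, div_le_iff₀ (pow_pos hpos 2)]
  nlinarith [iplusU_piSignedSq_sq_le G x, mul_le_mul_of_nonneg_right (hV x hx) hpos.le]

theorem half_le_ckSignless (hiso : ∀ i, 0 < G.degree i) {k : ℕ} (hkn : k ≤ n) {μ : ℝ}
    {V : Submodule ℝ (Fin n → ℝ)} (hkV : n < k + finrank ℝ V)
    (hV : ∀ x ∈ V, μ * degNormSq G x ≤ signlessEnergy G x) : μ / 2 ≤ ckSignless G k := by
  have hbdd : BddAbove (Set.range (RayleighPlus G)) :=
    ⟨1, Set.forall_mem_range.2 (rayleighPlus_le_one G)⟩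
  refine le_minimaxVal_of_submodule hbdd piSignedSq_neg hkn hkV fun x hx hx0 => ?_
  rw [rayleighPlus_piSignedSq, div_le_div_iff₀ two_pos (degNormSq_pos hiso hx0), mul_comm _ 2]
  exact (hV x hx).trans (signlessEnergy_le_two_mul_iplusU G x)

end NormalizedLaplacian

theorem stmt9 (G : SimpleGraph (Fin n)) [DecidableRel G.Adj]
    (hiso : ∀ i, 0 < G.degree i)
    (lam : Fin n → ℝ) (hmono : Monotone lam)
    (hroots : Finset.univ.val.map lam = (normLap G).charpoly.roots)
    (k : ℕ) (hk : 1 ≤ k) (hkn : k ≤ n) :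
    (ckSignless G k) ^ 2 / 2 ≤ 2 - lam ⟨n - k, by omega⟩ ∧
      2 - lam ⟨n - k, by omega⟩ ≤ 2 * ckSignless G k := by
  let j : Fin n := ⟨n - k, by omega⟩
  obtain ⟨V, hVdim, hV⟩ := exists_submodule_signlessEnergy_le hiso hroots (s := Ici j)
    fun i hi => sub_le_sub_left (hmono (mem_Ici.1 hi)) 2
  obtain ⟨W, hWdim, hW⟩ := exists_submodule_le_signlessEnergy hiso hroots (s := Iic j)
    fun i hi => sub_le_sub_left (hmono (mem_Iic.1 hi)) 2
  rw [Fin.card_Ici] at hVdim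
  rw [Fin.card_Iic] at hWdim
  have hnonneg : 0 ≤ 2 - lam j := sub_nonneg.2 (le_two_of_charpoly_roots_normLap hiso hroots j)
  have hlower : (2 - lam j) / 2 ≤ ckSignless G k :=
    half_le_ckSignless hiso hkn (by simp only [hWdim, j]; omega) hW
  have hupper : ckSignless G k ≤ √(2 * (2 - lam j)) :=
    ckSignless_le_sqrt hiso (by simp only [hVdim, j]; omega) hV
  have hsq : ckSignless G k ^ 2 ≤ 2 * (2 - lam j) :=
    (Real.le_sqrt (by linarith) (by linarith)).1 hupper
  exact ⟨by linarith, by linarith⟩
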